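/- arXiv:2007.14740 — 3 statements merged into one kernel-verified Lean document; each statement's English description precedes it below -/
import Mathlib

section
/- A binary matrix x ∈ {0,1}^{r×r} (with x_{ii} = 0) satisfying the assignment constraints is the incidence vector of a tour on {1,…,r} if and only if there exist real numbers y_{ij} ≥ 0 (for i ≠ j) such that y_{ij} ≤ (r−1)·x_{ij} for all i ≠ j, the net flow out of node 1 satisfies Σ_{j≠1} y_{1j} − Σ_{j≠1} y_{j1} = r − 1, and every node i ∈ {2,…,r} has net inflow Σ_{j≠i} y_{ji} − Σ_{j≠i} y_{ij} = 1 (the single-commodity flow formulation of Gavish and Graves). -/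
/-- A tour on the node set `Fin r`: a permutation consisting of a single cycle
through all `r` nodes. -/
def IsTour {r : ℕ} (σ : Equiv.Perm (Fin r)) : Prop :=
  σ.IsCycle ∧ ∀ i, σ i ≠ i

/-- The incidence vector of a tour `σ`: `x i j = 1` iff `j = σ i`. -/
def incidence {r : ℕ} (σ : Equiv.Perm (Fin r)) (i j : Fin r) : ℝ :=
  if σ i = j then 1 else 0

/-!
A binary matrix satisfying the assignment constraints is a permutation matrix, say of `σ`, and the
capacity constraint then confines the flow to the arcs `i → σ i`. The inflow at `σ i` and the
outflow at `i` are thus the same number, the load of the arc, and this load drops by one at every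
node other than the root. An orbit of `σ` avoiding the root would return to its starting point with
a strictly smaller load, so every orbit meets the root and `σ` is a tour. Conversely, on a tour, the
arc leaving the `k`-th node after the root carries the `r - 1 - k` units still to be delivered.
-/

open Equiv Finset

section Assignment

theorem existsUnique_eq_one_of_sum_eq_one {ι R : Type*} [NonAssocSemiring R] [CharZero R]
    {s : Finset ι} {f : ι → R} (hf : ∀ i ∈ s, f i = 0 ∨ f i = 1) (hsum : ∑ i ∈ s, f i = 1) :
    ∃! i, i ∈ s ∧ f i = 1 := by
  classical
  have hboole : ∀ i ∈ s, f i = if f i = 1 then 1 else 0 := fun i hi => by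
    rcases hf i hi with h | h <;> simp [h]
  have hcard : #{i ∈ s | f i = 1} = 1 := by
    rw [sum_congr rfl hboole, sum_boole] at hsum
    exact_mod_cast hsum
  obtain ⟨a, ha⟩ := card_eq_one.mp hcard
  have ha_iff : ∀ i, i ∈ s ∧ f i = 1 ↔ i = a := fun i => by
    simpa only [mem_filter, mem_singleton] using Finset.ext_iff.mp ha i
  exact ⟨a, (ha_iff a).mpr rfl, fun i => (ha_iff i).mp⟩

theorem exists_perm_eq_permMatrix {V R : Type*} [Fintype V] [DecidableEq V] [NonAssocSemiring R]
    [CharZero R] {x : Matrix V V R} (hbin : ∀ i j, x i j = 0 ∨ x i j = 1)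
    (hcol : ∀ j, ∑ i, x i j = 1) (hrow : ∀ i, ∑ j, x i j = 1) :
    ∃ σ : Perm V, x = σ.permMatrix R := by
  have hrow_unique : ∀ i, ∃! j, x i j = 1 := fun i => by
    simpa using existsUnique_eq_one_of_sum_eq_one (fun j _ => hbin i j) (hrow i)
  have hcol_unique : ∀ j, ∃! i, x i j = 1 := fun j => by
    simpa using existsUnique_eq_one_of_sum_eq_one (fun i _ => hbin i j) (hcol j)
  choose f hf hf_unique using hrow_unique
  have hx : ∀ i j, x i j = 1 ↔ f i = j := fun i j =>
    ⟨fun h => (hf_unique i j h).symm, fun h => h ▸ hf i⟩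
  have hbij : Function.Bijective f := by
    simpa only [Function.bijective_iff_existsUnique, hx] using hcol_unique
  refine ⟨Equiv.ofBijective f hbij, Matrix.ext fun i j => ?_⟩
  rcases hbin i j with h | h <;> simp [PEquiv.toMatrix_apply, ← hx, h]

end Assignment

section Cycle

variable {V : Type*} {σ : Perm V} {root : V}

/-- Here `pos i` is the number of steps from `root` to `i` along the cycle. -/
theorem exists_position_of_isCycleOn_univ [Fintype V] (hσ : σ.IsCycleOn Set.univ) (root : V) :
    ∃ pos : V → ℕ, pos root = 0 ∧ (∀ i, σ i = root → pos i + 1 = Fintype.card V) ∧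
      (∀ i, σ i ≠ root → pos (σ i) = pos i + 1) ∧ ∀ i, pos i < Fintype.card V := by
  rw [← coe_univ] at hσ
  choose pos hlt hpos using fun i => hσ.exists_pow_eq (mem_univ root) (mem_univ i)
  rw [card_univ] at hlt
  have hdvd : ∀ n, (σ ^ n) root = root ↔ Fintype.card V ∣ n := fun n =>
    hσ.pow_apply_eq (mem_univ root)
  have hsucc : ∀ i, (σ ^ (pos i + 1)) root = σ i := fun i => by
    rw [pow_succ', Perm.mul_apply, hpos]
  refine ⟨pos, ?_, fun i hi => ?_, fun i hi => ?_, hlt⟩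
  · exact Nat.eq_zero_of_dvd_of_lt ((hdvd _).mp (hpos root)) (hlt root)
  · have hcard_dvd : Fintype.card V ∣ pos i + 1 := (hdvd _).mp ((hsucc i).trans hi)
    exact le_antisymm (hlt i) (Nat.le_of_dvd (Nat.succ_pos _) hcard_dvd)
  · have hlt_succ : pos i + 1 < Fintype.card V := by
      refine lt_of_le_of_ne (hlt i) fun h => hi ?_
      rw [← hsucc, hdvd, ← h]
    have hmod : pos (σ i) ≡ pos i + 1 [MOD Fintype.card V] :=
      (hσ.pow_apply_eq_pow_apply (mem_univ root)).mp ((hpos _).trans (hsucc i).symm)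
    exact hmod.eq_of_lt_of_lt (hlt _) hlt_succ

theorem exists_pow_apply_eq_of_potential [Finite V] {R : Type*} [AddGroupWithOne R] [CharZero R]
    {g : V → R} (hg : ∀ i, σ i ≠ root → g i = g (σ i) + 1) (i : V) :
    ∃ n : ℕ, (σ ^ n) i = root := by
  by_contra! havoid
  have hdrop : ∀ n : ℕ, g i = g ((σ ^ n) i) + n := by
    intro n
    induction n with
    | zero => simp
    | succ n ih =>
      have hstep : σ ((σ ^ n) i) = (σ ^ (n + 1)) i := by rw [pow_succ', Perm.mul_apply]
      rw [ih, hg _ (hstep ▸ havoid (n + 1)), hstep, add_assoc, Nat.cast_succ,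
        Nat.cast_add_one_comm]
  have hperiod : g i = g i + orderOf σ := by simpa [pow_orderOf_eq_one] using hdrop (orderOf σ)
  exact (orderOf_pos σ).ne' (Nat.cast_eq_zero.mp (left_eq_add.mp hperiod))

theorem isCycleOn_univ_of_potential [Finite V] {R : Type*} [AddGroupWithOne R] [CharZero R]
    {g : V → R} (hg : ∀ i, σ i ≠ root → g i = g (σ i) + 1) : σ.IsCycleOn Set.univ := by
  have hroot : ∀ i, σ.SameCycle i root := fun i =>
    let ⟨n, hn⟩ := exists_pow_apply_eq_of_potential hg i
    ⟨n, by rwa [zpow_natCast]⟩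
  exact ⟨Set.bijOn_univ.mpr σ.bijective, fun i _ j _ => (hroot i).trans (hroot j).symm⟩

end Cycle

section Flow

variable {V R : Type*} [Fintype V] [DecidableEq V]

/-- The total flow of `y` on the arcs leaving `i`; the entry `y i i` is not an arc. -/
def outflow [AddCommMonoid R] (y : V → V → R) (i : V) : R :=
  ∑ j ∈ univ.erase i, y i j

/-- The total flow of `y` on the arcs entering `i`; the entry `y i i` is not an arc. -/
def inflow [AddCommMonoid R] (y : V → V → R) (i : V) : R :=
  ∑ j ∈ univ.erase i, y j i

/-- The Gavish–Graves constraints linking a flow `y` to an arc selection `x`: `root` ships one unit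
of a single commodity to each other node, using selected arcs only. Nothing is required of the
diagonal entries of `y`. -/
structure IsSingleCommodityFlow [Ring R] [PartialOrder R] (root : V) (x y : V → V → R) :
    Prop where
  nonneg : ∀ i j, i ≠ j → 0 ≤ y i j
  le_capacity : ∀ i j, i ≠ j → y i j ≤ ((Fintype.card V : R) - 1) * x i j
  supply : outflow y root - inflow y root = (Fintype.card V : R) - 1
  demand : ∀ i, i ≠ root → inflow y i - outflow y i = 1

section Support

variable [AddCommMonoid R] {σ : Perm V} {y : V → V → R} {i : V}

theorem outflow_eq_apply_of_support (hi : σ i ≠ i) (hy : ∀ i j, i ≠ j → σ i ≠ j → y i j = 0) :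
    outflow y i = y i (σ i) :=
  sum_eq_single_of_mem _ (mem_erase.mpr ⟨hi, mem_univ _⟩) fun j hj hne =>
    hy i j (ne_of_mem_erase hj).symm hne.symm

theorem inflow_apply_eq_apply_of_support (hi : σ i ≠ i)
    (hy : ∀ i j, i ≠ j → σ i ≠ j → y i j = 0) : inflow y (σ i) = y i (σ i) :=
  sum_eq_single_of_mem _ (mem_erase.mpr ⟨hi.symm, mem_univ _⟩) fun j hj hne =>
    hy j (σ i) (ne_of_mem_erase hj) (σ.injective.ne hne)

end Support

variable [Ring R] [PartialOrder R] {σ : Perm V} {root : V}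

theorem isSingleCommodityFlow_iff {x y : V → V → R} :
    IsSingleCommodityFlow root x y ↔
      (∀ i j, i ≠ j → 0 ≤ y i j) ∧
      (∀ i j, i ≠ j → y i j ≤ ((Fintype.card V : R) - 1) * x i j) ∧
      outflow y root - inflow y root = (Fintype.card V : R) - 1 ∧
      ∀ i, i ≠ root → inflow y i - outflow y i = 1 :=
  ⟨fun ⟨h₁, h₂, h₃, h₄⟩ => ⟨h₁, h₂, h₃, h₄⟩, fun ⟨h₁, h₂, h₃, h₄⟩ => ⟨h₁, h₂, h₃, h₄⟩⟩

namespace IsSingleCommodityFlow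

theorem eq_zero_of_apply_ne {y : V → V → R}
    (hy : IsSingleCommodityFlow root (σ.permMatrix R) y) (i j : V) (hij : i ≠ j)
    (hσ : σ i ≠ j) : y i j = 0 :=
  le_antisymm (by simpa [PEquiv.toMatrix_apply, hσ] using hy.le_capacity i j hij)
    (hy.nonneg i j hij)

theorem isCycleOn_univ [CharZero R] {y : V → V → R}
    (hy : IsSingleCommodityFlow root (σ.permMatrix R) y) (hfix : ∀ i, σ i ≠ i) :
    σ.IsCycleOn Set.univ := by
  refine isCycleOn_univ_of_potential (root := root) (g := fun i => y i (σ i)) fun i hi => ?_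
  have hdemand := hy.demand (σ i) hi
  rwa [inflow_apply_eq_apply_of_support (hfix i) hy.eq_zero_of_apply_ne,
    outflow_eq_apply_of_support (hfix (σ i)) hy.eq_zero_of_apply_ne, sub_eq_iff_eq_add'] at hdemand

end IsSingleCommodityFlow

variable [IsOrderedRing R]

theorem exists_isSingleCommodityFlow_of_isCycleOn_univ (hσ : σ.IsCycleOn Set.univ)
    (hfix : ∀ i, σ i ≠ i) (root : V) :
    ∃ y : V → V → R, IsSingleCommodityFlow root (σ.permMatrix R) y := by
  obtain ⟨pos, hroot, hlast, hsucc, hlt⟩ := exists_position_of_isCycleOn_univ hσ root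
  let load : V → R := fun i => Fintype.card V - 1 - pos i
  have hload_nonneg : ∀ i, 0 ≤ load i := fun i => by
    have hle : (pos i + 1 : R) ≤ Fintype.card V := by
      rw [← Nat.cast_succ]
      exact Nat.mono_cast (hlt i)
    rwa [sub_nonneg, le_sub_iff_add_le]
  let y : V → V → R := fun i j => if σ i = j then load i else 0
  have hsupport : ∀ i j, i ≠ j → σ i ≠ j → y i j = 0 := fun i j _ h => if_neg h
  have houtflow : ∀ i, outflow y i = load i := fun i =>
    (outflow_eq_apply_of_support (hfix i) hsupport).trans (if_pos rfl)
  have hinflow : ∀ i, inflow y (σ i) = load i := fun i =>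
    (inflow_apply_eq_apply_of_support (hfix i) hsupport).trans (if_pos rfl)
  refine ⟨y, fun i j _ => ?nonneg, fun i j _ => ?le_capacity, ?supply, fun j hj => ?demand⟩
  case nonneg =>
    dsimp only [y]
    split_ifs
    exacts [hload_nonneg i, le_rfl]
  case le_capacity =>
    by_cases h : σ i = j <;> simp [y, load, PEquiv.toMatrix_apply, h]
  case supply =>
    obtain ⟨i, hi⟩ := σ.surjective root
    have hlast_load : load i = 0 := by simp [load, ← hlast i hi]
    rw [houtflow, ← hi, hinflow, hlast_load, hi, sub_zero]
    simp [load, hroot]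
  case demand =>
    obtain ⟨i, rfl⟩ := σ.surjective j
    rw [hinflow, houtflow]
    simp [load, hsucc i hj]

theorem single_commodity_flow_characterizes_tours_general [CharZero R] {x : Matrix V V R}
    (hbin : ∀ i j, x i j = 0 ∨ x i j = 1) (hdiag : ∀ i, x i i = 0)
    (hcol : ∀ j, ∑ i ∈ univ.erase j, x i j = 1) (hrow : ∀ i, ∑ j ∈ univ.erase i, x i j = 1)
    (root : V) :
    (∃ σ : Perm V, σ.IsCycleOn Set.univ ∧ x = σ.permMatrix R) ↔
      ∃ y : V → V → R, IsSingleCommodityFlow root x y := by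
  have hfix : ∀ σ : Perm V, x = σ.permMatrix R → ∀ i, σ i ≠ i := by
    rintro σ rfl i
    simpa [PEquiv.toMatrix_apply] using hdiag i
  constructor
  · rintro ⟨σ, hσ, hx⟩
    exact hx ▸ exists_isSingleCommodityFlow_of_isCycleOn_univ hσ (hfix σ hx) root
  · rintro ⟨y, hy⟩
    obtain ⟨σ, hx⟩ := exists_perm_eq_permMatrix hbin
      (fun j => (sum_erase univ (f := fun i => x i j) (hdiag j)).symm.trans (hcol j))
      (fun i => (sum_erase univ (hdiag i)).symm.trans (hrow i))
    exact ⟨σ, (hx ▸ hy).isCycleOn_univ (hfix σ hx), hx⟩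

end Flow

theorem isTour_iff_isCycleOn_univ {r : ℕ} [Nontrivial (Fin r)] {σ : Perm (Fin r)} :
    IsTour σ ↔ σ.IsCycleOn Set.univ := by
  constructor
  · rintro ⟨hcycle, hfix⟩
    simpa only [hfix, ne_eq, not_false_eq_true, Set.ofPred_true] using hcycle.isCycleOn
  · intro hσ
    exact ⟨Perm.isCycle_iff_exists_isCycleOn.mpr
      ⟨Set.univ, Set.nontrivial_univ, hσ, fun i _ => Set.mem_univ i⟩,
      fun i => hσ.apply_ne Set.nontrivial_univ (Set.mem_univ i)⟩

theorem forall_eq_incidence_iff {r : ℕ} {σ : Perm (Fin r)} {x : Matrix (Fin r) (Fin r) ℝ} :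
    (∀ i j, x i j = incidence σ i j) ↔ x = σ.permMatrix ℝ := by
  simp only [← Matrix.ext_iff, incidence, PEquiv.toMatrix_apply, Equiv.toPEquiv_apply,
    Option.mem_some_iff]

/-- A binary matrix with zero diagonal satisfying the assignment constraints is
the incidence vector of a tour iff there exists a nonnegative flow `y` with
`y i j ≤ (r−1)·x i j`, net flow `r − 1` out of node `1` (index `0`), and net
inflow `1` at every other node (the single-commodity flow formulation of
Gavish and Graves). -/
theorem single_commodity_flow_characterizes_tours (r : ℕ) [NeZero r] (hr : 3 ≤ r)
    (x : Fin r → Fin r → ℝ)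
    (hbin : ∀ i j, x i j = 0 ∨ x i j = 1)
    (hdiag : ∀ i, x i i = 0)
    (hassign₁ : ∀ j : Fin r, ∑ i ∈ Finset.univ.erase j, x i j = 1)
    (hassign₂ : ∀ i : Fin r, ∑ j ∈ Finset.univ.erase i, x i j = 1) :
    (∃ σ : Equiv.Perm (Fin r), IsTour σ ∧ ∀ i j, x i j = incidence σ i j) ↔
    (∃ y : Fin r → Fin r → ℝ,
      (∀ i j : Fin r, i ≠ j → 0 ≤ y i j) ∧
      (∀ i j : Fin r, i ≠ j → y i j ≤ ((r : ℝ) - 1) * x i j) ∧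
      ((∑ j ∈ Finset.univ.erase (0 : Fin r), y 0 j) -
        (∑ j ∈ Finset.univ.erase (0 : Fin r), y j 0) = (r : ℝ) - 1) ∧
      (∀ i : Fin r, i ≠ 0 →
        (∑ j ∈ Finset.univ.erase i, y j i) -
          (∑ j ∈ Finset.univ.erase i, y i j) = 1)) := by
  have : Nontrivial (Fin r) := Fin.nontrivial_iff_two_le.mpr (by omega)
  refine (exists_congr fun σ =>
    and_congr isTour_iff_isCycleOn_univ forall_eq_incidence_iff).trans ?_
  simpa only [isSingleCommodityFlow_iff, outflow, inflow, Fintype.card_fin] using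
    single_commodity_flow_characterizes_tours_general hbin hdiag hassign₁ hassign₂ 0
end

section
/- A binary matrix x ∈ {0,1}^{r×r} (with x_{ii} = 0) satisfying the assignment constraints is the incidence vector of a tour on {1,…,r} if and only if there exist real numbers y_{ij} ≥ 0 and z_{ij} ≥ 0 (for i ≠ j) such that: Σ_{j≠1}(y_{1j} − y_{j1}) = r − 1; Σ_{j≠1}(z_{1j} − z_{j1}) = −(r − 1); Σ_{j≠i}(y_{ij} − y_{ji}) = −1 for every i ∈ {2,…,r}; Σ_{j≠i}(z_{ij} − z_{ji}) = 1 for every i ∈ {2,…,r}; and y_{ij} + z_{ij} = (r − 1)·x_{ij} for all i ≠ j (the two-commodity flow formulation of Finke, Claus and Gunn). -/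
/-!
Along a tour starting at the root, let the first commodity drop one unit and the second pick up one
unit at each node; the two always add up to `r - 1`. Conversely, every node takes in a positive
amount of one of the commodities, so the successor map read off the rows of `x` is surjective, hence
a permutation. The first commodity then strictly decreases along every arc that does not enter the
root, so no cycle of the permutation can avoid the root.
-/

open Finset Equiv

section Permutations

variable {V : Type*} {σ : Perm V} {root : V}

lemma exists_position_of_isCycleOn {s : Finset V} (hσ : σ.IsCycleOn (s : Set V))
    (hroot : root ∈ s) :
    ∃ p : V → ℕ, p root = 0 ∧ ∀ i ∈ s, p i < #s ∧
      (σ i = root → p i + 1 = #s) ∧ (σ i ≠ root → p (σ i) = p i + 1) := by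
  choose! p p_lt pow_p using fun i (hi : i ∈ s) ↦ hσ.exists_pow_eq hroot hi
  have pow_p_succ (i : V) (hi : i ∈ s) : (σ ^ (p i + 1)) root = σ i := by
    rw [pow_succ', Perm.mul_apply, pow_p i hi]
  have p_eq_of_pow_eq (i : V) (hi : i ∈ s) (n : ℕ) (hn : n < #s) (h : (σ ^ n) root = i) :
      p i = n :=
    ((hσ.pow_apply_eq_pow_apply hroot).1 ((pow_p i hi).trans h.symm)).eq_of_lt_of_lt (p_lt i hi) hn
  refine ⟨p, p_eq_of_pow_eq root hroot 0 (card_pos.2 ⟨root, hroot⟩) rfl, fun i hi ↦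
    ⟨p_lt i hi, fun h ↦ ?_, fun h ↦ ?_⟩⟩
  · have card_dvd : #s ∣ p i + 1 := (hσ.pow_apply_eq hroot).1 ((pow_p_succ i hi).trans h)
    exact le_antisymm (p_lt i hi) (Nat.le_of_dvd (Nat.succ_pos _) card_dvd)
  · have p_succ_ne : p i + 1 ≠ #s := fun h_card ↦
      h (by rw [← pow_p_succ i hi, h_card, hσ.pow_card_apply hroot])
    exact p_eq_of_pow_eq (σ i) (hσ.apply_mem_iff.2 hi) _ (lt_of_le_of_ne (p_lt i hi) p_succ_ne)
      (pow_p_succ i hi)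

lemma sameCycle_of_lt_of_apply_ne [Finite V] {α : Type*} [Preorder α] {a : V → α}
    (ha : ∀ i, σ i ≠ root → a (σ i) < a i) (i : V) : σ.SameCycle root i := by
  obtain ⟨j, hij, hj_min⟩ :=
    (Set.toFinite {j | σ.SameCycle i j}).exists_minimalFor a _ ⟨i, Perm.SameCycle.refl σ i⟩
  have hσj : σ.SameCycle i (σ j) := Perm.sameCycle_apply_right.2 hij
  have hσj_root : σ j = root := by
    by_contra h
    exact (ha j h).not_ge (hj_min hσj (ha j h).le)
  exact hσj_root ▸ hσj.symm

end Permutations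

lemma exists_eq_single_of_sum_eq_one {ι R : Type*} [Fintype ι] [DecidableEq ι]
    [NonAssocSemiring R] [CharZero R] {v : ι → R} (hv : ∀ i, v i = 0 ∨ v i = 1)
    (hsum : ∑ i, v i = 1) : ∃ a, v = Pi.single a 1 := by
  classical
  have v_eq_ite (i : ι) : v i = if v i = 1 then 1 else 0 := by
    rcases hv i with h | h <;> simp [h]
  have card_support : #{i | v i = 1} = 1 := by
    rw [sum_congr rfl fun i _ ↦ v_eq_ite i, sum_boole] at hsum
    exact_mod_cast hsum
  obtain ⟨a, ha⟩ := card_eq_one.1 card_support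
  refine ⟨a, funext fun i ↦ ?_⟩
  have v_eq_one_iff : v i = 1 ↔ i = a := by simpa using congrArg (i ∈ ·) ha
  rw [v_eq_ite, Pi.single_apply]
  simp only [v_eq_one_iff]

section NetOutflow

variable {V R : Type*} [Fintype V] [DecidableEq V]

/-- The net amount of a flow `y` on the arcs of the complete digraph on `V` that leaves `i`; the
values of `y` on the diagonal are ignored. -/
def netOutflow [AddCommGroup R] (y : V → V → R) (i : V) : R :=
  ∑ j ∈ univ.erase i, (y i j - y j i)

lemma netOutflow_apply_of_eq_zero [AddCommGroup R] {σ : Perm V} (hσ : ∀ i, σ i ≠ i)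
    {y : V → V → R} (hy : ∀ i j, i ≠ j → σ i ≠ j → y i j = 0) (i : V) :
    netOutflow y (σ i) = y (σ i) (σ (σ i)) - y i (σ i) := by
  rw [netOutflow, sum_sub_distrib]
  congr 1
  · exact sum_eq_single_of_mem _ (by simp [hσ]) fun j hj hne ↦
      hy _ _ (ne_of_mem_erase hj).symm hne.symm
  · exact sum_eq_single_of_mem (f := fun j ↦ y j (σ i)) _ (by simp [(hσ i).symm]) fun j hj hne ↦
      hy _ _ (ne_of_mem_erase hj) (σ.injective.ne hne)

lemma netOutflow_ite_apply [AddCommGroup R] {σ : Perm V} (hσ : ∀ i, σ i ≠ i) (a : V → R) (i : V) :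
    netOutflow (fun i j ↦ if σ i = j then a i else 0) (σ i) = a (σ i) - a i := by
  rw [netOutflow_apply_of_eq_zero hσ fun i j _ h ↦ if_neg h, if_pos rfl, if_pos rfl]

lemma exists_pos_of_netOutflow_neg [AddCommGroup R] [LinearOrder R] [IsOrderedAddMonoid R]
    {y : V → V → R} (hy : ∀ i j, i ≠ j → 0 ≤ y i j) {i : V} (hi : netOutflow y i < 0) :
    ∃ j, j ≠ i ∧ 0 < y j i := by
  obtain ⟨j, hj, h_neg⟩ := exists_lt_of_sum_lt (hi.trans_eq sum_const_zero.symm)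
  have hji : j ≠ i := ne_of_mem_erase hj
  exact ⟨j, hji, (hy i j hji.symm).trans_lt (sub_neg.1 h_neg)⟩

end NetOutflow

/-- The constraints of the two-commodity flow formulation on an arbitrary finite node set `V`, with
`root` in the role of node `1`: commodity `y` is shipped from `root`, one unit to every other node,
commodity `z` is collected at `root`, one unit from every other node, and together they fill exactly
the arcs selected by `x`. -/
def IsTwoCommodityFlow {V R : Type*} [Fintype V] [DecidableEq V] [Ring R] [LE R]
    (root : V) (x y z : V → V → R) : Prop :=
  (∀ i j, i ≠ j → 0 ≤ y i j) ∧
  (∀ i j, i ≠ j → 0 ≤ z i j) ∧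
  netOutflow y root = (Fintype.card V : R) - 1 ∧
  netOutflow z root = -((Fintype.card V : R) - 1) ∧
  (∀ i, i ≠ root → netOutflow y i = -1) ∧
  (∀ i, i ≠ root → netOutflow z i = 1) ∧
  (∀ i j, i ≠ j → y i j + z i j = ((Fintype.card V : R) - 1) * x i j)

section TwoCommodityFlow

variable {V R : Type*} [Fintype V] [DecidableEq V] [CommRing R] [LinearOrder R]
  [IsStrictOrderedRing R] {root : V} {x y z : V → V → R}

lemma exists_isTwoCommodityFlow_of_isCycle {σ : Perm V} (hcycle : σ.IsCycle)
    (hσ : ∀ i, σ i ≠ i) (root : V) :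
    ∃ y z : V → V → R, IsTwoCommodityFlow root (fun i j ↦ if σ i = j then 1 else 0) y z := by
  have hcycleOn : σ.IsCycleOn ((univ : Finset V) : Set V) := by
    simpa [hσ] using hcycle.isCycleOn
  obtain ⟨p, p_root, hp⟩ := exists_position_of_isCycleOn hcycleOn (mem_univ root)
  have p_le (i : V) : (p i : R) + 1 ≤ Fintype.card V := by
    exact_mod_cast (hp i (mem_univ i)).1
  have p_last (i : V) (hi : σ i = root) : (p i : R) + 1 = Fintype.card V := by
    exact_mod_cast (hp i (mem_univ i)).2.1 hi
  have p_apply (i : V) (hi : σ i ≠ root) : (p (σ i) : R) = p i + 1 := by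
    exact_mod_cast (hp i (mem_univ i)).2.2 hi
  obtain ⟨last, rfl⟩ := σ.surjective root
  refine ⟨fun i j ↦ if σ i = j then (Fintype.card V : R) - 1 - p i else 0,
    fun i j ↦ if σ i = j then (p i : R) else 0, fun i j _ ↦ ?_, fun i j _ ↦ ?_, ?_, ?_,
    σ.surjective.forall.2 fun i hi ↦ ?_, σ.surjective.forall.2 fun i hi ↦ ?_, fun i j _ ↦ ?_⟩
  · dsimp only
    split_ifs
    · linarith [p_le i]
    · rfl
  · dsimp only
    split_ifs <;> positivity
  · rw [netOutflow_ite_apply hσ, p_root, ← p_last last rfl]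
    push_cast
    ring
  · rw [netOutflow_ite_apply hσ, p_root, ← p_last last rfl]
    push_cast
    ring
  · rw [netOutflow_ite_apply hσ, p_apply i hi]
    ring
  · rw [netOutflow_ite_apply hσ, p_apply i hi]
    ring
  · dsimp only
    split_ifs <;> ring

namespace IsTwoCommodityFlow

lemma eq_zero_of_eq_zero (h : IsTwoCommodityFlow root x y z) {i j : V} (hij : i ≠ j)
    (hx : x i j = 0) : y i j = 0 ∧ z i j = 0 := by
  obtain ⟨hy, hz, -, -, -, -, hyz⟩ := h
  exact (add_eq_zero_iff_of_nonneg (hy i j hij) (hz i j hij)).1 (by rw [hyz i j hij, hx, mul_zero])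

lemma exists_ne_zero [Nontrivial V] (h : IsTwoCommodityFlow root x y z) (i : V) :
    ∃ j, x j i ≠ 0 := by
  have ⟨hy, hz, _, z_root, y_nonroot, _, _⟩ := h
  rcases eq_or_ne i root with rfl | hi
  · have z_neg : netOutflow z i < 0 := by
      rw [z_root, neg_lt_zero, sub_pos]
      exact_mod_cast Fintype.one_lt_card (α := V)
    obtain ⟨j, hji, z_pos⟩ := exists_pos_of_netOutflow_neg hz z_neg
    exact ⟨j, fun hx ↦ z_pos.ne' (h.eq_zero_of_eq_zero hji hx).2⟩
  · have y_neg : netOutflow y i < 0 := by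
      rw [y_nonroot i hi]
      exact neg_one_lt_zero
    obtain ⟨j, hji, y_pos⟩ := exists_pos_of_netOutflow_neg hy y_neg
    exact ⟨j, fun hx ↦ y_pos.ne' (h.eq_zero_of_eq_zero hji hx).1⟩

lemma isCycle {σ : Perm V} (hσ : ∀ i, σ i ≠ i)
    (h : IsTwoCommodityFlow root (fun i j ↦ if σ i = j then 1 else 0) y z) : σ.IsCycle := by
  have y_eq_zero (i j : V) (hij : i ≠ j) (hσij : σ i ≠ j) : y i j = 0 :=
    (h.eq_zero_of_eq_zero hij (if_neg hσij)).1
  obtain ⟨-, -, -, -, y_nonroot, -, -⟩ := h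
  have y_decreasing (i : V) (hi : σ i ≠ root) : y (σ i) (σ (σ i)) < y i (σ i) := by
    rw [← sub_neg, ← netOutflow_apply_of_eq_zero hσ y_eq_zero, y_nonroot _ hi]
    exact neg_one_lt_zero
  exact ⟨root, hσ root, fun i _ ↦
    sameCycle_of_lt_of_apply_ne (a := fun i ↦ y i (σ i)) y_decreasing i⟩

lemma exists_perm (h : IsTwoCommodityFlow root x y z) (hbin : ∀ i j, x i j = 0 ∨ x i j = 1)
    (hdiag : ∀ i, x i i = 0) (hrow : ∀ i, ∑ j ∈ univ.erase i, x i j = 1) :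
    ∃ σ : Perm V, (∀ i, σ i ≠ i) ∧ x = fun i j ↦ if σ i = j then 1 else 0 := by
  choose f hf using fun i ↦
    exists_eq_single_of_sum_eq_one (hbin i) ((sum_erase _ (hdiag i)).symm.trans (hrow i))
  have x_eq : x = fun i j ↦ if f i = j then 1 else 0 := by
    ext i j
    rw [hf, Pi.single_apply]
    simp only [eq_comm]
  have f_ne (i : V) : f i ≠ i := fun hi ↦ by simpa [x_eq, hi] using hdiag i
  have : Nontrivial V := nontrivial_of_ne _ _ (f_ne root)
  have f_surjective : f.Surjective := fun i ↦ by
    obtain ⟨j, hj⟩ := h.exists_ne_zero i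
    exact ⟨j, by simpa [x_eq] using hj⟩
  exact ⟨Equiv.ofBijective f (Finite.surjective_iff_bijective.1 f_surjective), f_ne, x_eq⟩

end IsTwoCommodityFlow

theorem two_commodity_flow_characterizes_tours_general (root : V)
    (hbin : ∀ i j, x i j = 0 ∨ x i j = 1) (hdiag : ∀ i, x i i = 0)
    (hrow : ∀ i, ∑ j ∈ univ.erase i, x i j = 1) :
    (∃ σ : Perm V, (σ.IsCycle ∧ ∀ i, σ i ≠ i) ∧ ∀ i j, x i j = if σ i = j then 1 else 0) ↔
      ∃ y z, IsTwoCommodityFlow root x y z := by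
  constructor
  · rintro ⟨σ, ⟨hcycle, hσ⟩, hx⟩
    obtain rfl : x = fun i j ↦ if σ i = j then 1 else 0 := funext₂ hx
    exact exists_isTwoCommodityFlow_of_isCycle hcycle hσ root
  · rintro ⟨y, z, h⟩
    obtain ⟨σ, hσ, rfl⟩ := h.exists_perm hbin hdiag hrow
    exact ⟨σ, ⟨h.isCycle hσ, hσ⟩, fun _ _ ↦ rfl⟩

end TwoCommodityFlow

/-- A binary matrix with zero diagonal satisfying the assignment constraints is
the incidence vector of a tour iff there exist nonnegative flows `y`, `z`
satisfying the two-commodity flow constraints of Finke, Claus and Gunn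
(node `1` is index `0`). -/
theorem two_commodity_flow_characterizes_tours (r : ℕ) [NeZero r] (hr : 3 ≤ r)
    (x : Fin r → Fin r → ℝ)
    (hbin : ∀ i j, x i j = 0 ∨ x i j = 1)
    (hdiag : ∀ i, x i i = 0)
    (hassign₁ : ∀ j : Fin r, ∑ i ∈ Finset.univ.erase j, x i j = 1)
    (hassign₂ : ∀ i : Fin r, ∑ j ∈ Finset.univ.erase i, x i j = 1) :
    (∃ σ : Equiv.Perm (Fin r), IsTour σ ∧ ∀ i j, x i j = incidence σ i j) ↔
    (∃ y z : Fin r → Fin r → ℝ,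
      (∀ i j : Fin r, i ≠ j → 0 ≤ y i j) ∧
      (∀ i j : Fin r, i ≠ j → 0 ≤ z i j) ∧
      (∑ j ∈ Finset.univ.erase (0 : Fin r), (y 0 j - y j 0) = (r : ℝ) - 1) ∧
      (∑ j ∈ Finset.univ.erase (0 : Fin r), (z 0 j - z j 0) = -((r : ℝ) - 1)) ∧
      (∀ i : Fin r, i ≠ 0 → ∑ j ∈ Finset.univ.erase i, (y i j - y j i) = -1) ∧
      (∀ i : Fin r, i ≠ 0 → ∑ j ∈ Finset.univ.erase i, (z i j - z j i) = 1) ∧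
      (∀ i j : Fin r, i ≠ j → y i j + z i j = ((r : ℝ) - 1) * x i j)) := by
  simpa only [IsTour, incidence, IsTwoCommodityFlow, netOutflow, Fintype.card_fin] using
    two_commodity_flow_characterizes_tours_general 0 hbin hdiag hassign₂
end

section
/- For every tour σ on {1,…,r} with incidence vector x and positions u, the three-node radical inequality 2u_i − u_j − u_k + (2r−2)(x_{ij} + x_{ik}) + (2r−8)(x_{ji} + x_{ki}) + (2r−5)(x_{jk} + x_{kj}) ≤ 4r − 10 holds for all pairwise distinct i, j, k ∈ {2,…,r}. -/
/-- `u` gives the positions of the nodes along the tour `σ`: `u i` is the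
(unique) integer in `{1, …, r}` with `σ^(u i − 1) 1 = i` (node `1` is index `0`). -/
def IsPositions {r : ℕ} [NeZero r] (σ : Equiv.Perm (Fin r)) (u : Fin r → ℕ) : Prop :=
  ∀ i, 1 ≤ u i ∧ u i ≤ r ∧ (σ ^ (u i - 1)) (0 : Fin r) = i

namespace IsPositions

variable {r : ℕ} [NeZero r] {σ : Equiv.Perm (Fin r)} {u : Fin r → ℕ} {a b : Fin r}

theorem injective (hu : IsPositions σ u) : Function.Injective u := fun a b h ↦ by
  rw [← (hu a).2.2, h, (hu b).2.2]

theorem two_le (hu : IsPositions σ u) (ha : a ≠ 0) : 2 ≤ u a := by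
  obtain ⟨one_le, -, reach⟩ := hu a
  have ne_one : u a ≠ 1 := fun h ↦ ha (by simpa [h] using reach.symm)
  omega

theorem exists_eq_of_mem_Icc (hu : IsPositions σ u) {n : ℕ} (hn : n ∈ Finset.Icc 1 r) :
    ∃ a, u a = n := by
  have maps : Set.MapsTo u (Finset.univ : Finset (Fin r)) (Finset.Icc 1 r) := fun a _ ↦
    Finset.mem_coe.2 (Finset.mem_Icc.2 ⟨(hu a).1, (hu a).2.1⟩)
  obtain ⟨a, -, ha⟩ :=
    Finset.surjOn_of_injOn_of_card_le u maps hu.injective.injOn (by simp) hn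
  exact ⟨a, ha⟩

theorem apply_eq_of_eq_add_one (hu : IsPositions σ u) (h : u b = u a + 1) : σ a = b := by
  have exponent : u a - 1 + 1 = u b - 1 := by have := (hu a).1; omega
  calc
    σ a = σ ((σ ^ (u a - 1)) 0) := by rw [(hu a).2.2]
    _ = (σ ^ (u b - 1)) 0 := by rw [← Equiv.Perm.mul_apply, ← pow_succ', exponent]
    _ = b := (hu b).2.2

theorem apply_eq_iff (hu : IsPositions σ u) (hb : b ≠ 0) : σ a = b ↔ u b = u a + 1 := by
  refine ⟨fun hab ↦ ?_, hu.apply_eq_of_eq_add_one⟩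
  have two_le_b := hu.two_le hb
  have b_le := (hu b).2.1
  obtain ⟨c, hc⟩ := hu.exists_eq_of_mem_Icc (n := u b - 1) (Finset.mem_Icc.2 (by omega))
  have succ_c : u b = u c + 1 := by omega
  have hca : c = a := σ.injective ((hu.apply_eq_of_eq_add_one succ_c).trans hab.symm)
  rwa [hca] at succ_c

end IsPositions

/-- The indicator that `q` immediately follows `p`: the incidence vector of a tour expressed in
terms of positions. It is integer-valued so that the radical inequality becomes integer linear
arithmetic. -/
def succIndicator (p q : ℤ) : ℤ :=
  if q = p + 1 then 1 else 0

theorem succIndicator_eq_zero_of_le {p q : ℤ} (h : q ≤ p) : succIndicator p q = 0 :=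
  if_neg (by omega)

theorem succIndicator_eq_one_or_gap {p q : ℤ} (h : p < q) :
    q = p + 1 ∧ succIndicator p q = 1 ∨ p + 2 ≤ q ∧ succIndicator p q = 0 := by
  by_cases adjacent : q = p + 1
  · exact .inl ⟨adjacent, if_pos adjacent⟩
  · exact .inr ⟨by omega, if_neg adjacent⟩

theorem succIndicator_eq_zero_of_lt_of_lt {p q s : ℤ} (hpq : p < q) (hqs : q < s) :
    succIndicator p s = 0 :=
  if_neg (by omega)

theorem IsPositions.incidence_eq {r : ℕ} [NeZero r] {σ : Equiv.Perm (Fin r)} {u : Fin r → ℕ}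
    (hu : IsPositions σ u) {a b : Fin r} (hb : b ≠ 0) :
    incidence σ a b = succIndicator (u a) (u b) := by
  simp only [incidence, succIndicator, hu.apply_eq_iff hb]
  norm_cast

/-- The left-hand side of the three-node radical inequality as a function of the positions `a`, `b`,
`c` of the nodes `i`, `j`, `k`. -/
def radicalForm (r a b c : ℤ) : ℤ :=
  2 * a - b - c
    + (2 * r - 2) * (succIndicator a b + succIndicator a c)
    + (2 * r - 8) * (succIndicator b a + succIndicator c a)
    + (2 * r - 5) * (succIndicator b c + succIndicator c b)

section radicalForm

variable {r a b c : ℤ}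

theorem radicalForm_swap (r a b c : ℤ) : radicalForm r a c b = radicalForm r a b c := by
  unfold radicalForm
  ring

theorem radicalForm_eq_of_a_first (hab : a < b) (hbc : b < c) :
    radicalForm r a b c =
      2 * a - b - c + (2 * r - 2) * succIndicator a b + (2 * r - 5) * succIndicator b c := by
  simp [radicalForm, succIndicator_eq_zero_of_lt_of_lt hab hbc, succIndicator_eq_zero_of_le hab.le,
    succIndicator_eq_zero_of_le (hab.trans hbc).le, succIndicator_eq_zero_of_le hbc.le]

theorem radicalForm_eq_of_a_between (hba : b < a) (hac : a < c) :
    radicalForm r a b c =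
      2 * a - b - c + (2 * r - 2) * succIndicator a c + (2 * r - 8) * succIndicator b a := by
  simp [radicalForm, succIndicator_eq_zero_of_lt_of_lt hba hac, succIndicator_eq_zero_of_le hba.le,
    succIndicator_eq_zero_of_le (hba.trans hac).le, succIndicator_eq_zero_of_le hac.le]

theorem radicalForm_eq_of_a_last (hbc : b < c) (hca : c < a) :
    radicalForm r a b c =
      2 * a - b - c + (2 * r - 8) * succIndicator c a + (2 * r - 5) * succIndicator b c := by
  simp [radicalForm, succIndicator_eq_zero_of_lt_of_lt hbc hca, succIndicator_eq_zero_of_le hbc.le,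
    succIndicator_eq_zero_of_le (hbc.trans hca).le, succIndicator_eq_zero_of_le hca.le]

theorem radicalForm_le_of_a_first (hr : 2 ≤ r) (hab : a < b) (hbc : b < c) :
    radicalForm r a b c ≤ 4 * r - 10 := by
  rw [radicalForm_eq_of_a_first hab hbc]
  rcases succIndicator_eq_one_or_gap hab with ⟨adjacent₁, arc₁⟩ | ⟨gap₁, arc₁⟩ <;>
    rcases succIndicator_eq_one_or_gap hbc with ⟨adjacent₂, arc₂⟩ | ⟨gap₂, arc₂⟩ <;>
    rw [arc₁, arc₂] <;> omega

theorem radicalForm_le_of_a_between (hb : 2 ≤ b) (hc : c ≤ r) (hba : b < a) (hac : a < c) :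
    radicalForm r a b c ≤ 4 * r - 10 := by
  rw [radicalForm_eq_of_a_between hba hac]
  rcases succIndicator_eq_one_or_gap hac with ⟨adjacent₁, arc₁⟩ | ⟨gap₁, arc₁⟩ <;>
    rcases succIndicator_eq_one_or_gap hba with ⟨adjacent₂, arc₂⟩ | ⟨gap₂, arc₂⟩ <;>
    rw [arc₁, arc₂] <;> omega

theorem radicalForm_le_of_a_last (hb : 2 ≤ b) (ha : a ≤ r) (hbc : b < c) (hca : c < a) :
    radicalForm r a b c ≤ 4 * r - 10 := by
  rw [radicalForm_eq_of_a_last hbc hca]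
  rcases succIndicator_eq_one_or_gap hca with ⟨adjacent₁, arc₁⟩ | ⟨gap₁, arc₁⟩ <;>
    rcases succIndicator_eq_one_or_gap hbc with ⟨adjacent₂, arc₂⟩ | ⟨gap₂, arc₂⟩ <;>
    rw [arc₁, arc₂] <;> omega

theorem radicalForm_le (ha : a ≤ r) (hb : b ∈ Set.Icc 2 r) (hc : c ∈ Set.Icc 2 r)
    (hab : a ≠ b) (hac : a ≠ c) (hbc : b ≠ c) : radicalForm r a b c ≤ 4 * r - 10 := by
  wlog b_lt_c : b < c generalizing b c
  · rw [← radicalForm_swap]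
    exact this hc hb hac hab hbc.symm (by omega)
  rcases hab.lt_or_gt with a_lt_b | b_lt_a
  · exact radicalForm_le_of_a_first (hb.1.trans hb.2) a_lt_b b_lt_c
  rcases hac.lt_or_gt with a_lt_c | c_lt_a
  · exact radicalForm_le_of_a_between hb.1 hc.2 b_lt_a a_lt_c
  · exact radicalForm_le_of_a_last hb.1 ha b_lt_c c_lt_a

end radicalForm

theorem radical_valid (r : ℕ) [NeZero r] (hr : 4 ≤ r)
    (σ : Equiv.Perm (Fin r)) (hσ : IsTour σ)
    (u : Fin r → ℕ) (hu : IsPositions σ u)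
    (i j k : Fin r) (hi : i ≠ 0) (hj : j ≠ 0) (hk : k ≠ 0)
    (hij : i ≠ j) (hik : i ≠ k) (hjk : j ≠ k) :
    2 * (u i : ℝ) - (u j : ℝ) - (u k : ℝ)
      + (2 * (r : ℝ) - 2) * (incidence σ i j + incidence σ i k)
      + (2 * (r : ℝ) - 8) * (incidence σ j i + incidence σ k i)
      + (2 * (r : ℝ) - 5) * (incidence σ j k + incidence σ k j)
      ≤ 4 * (r : ℝ) - 10 := by
  have mem_Icc {a : Fin r} (ha : a ≠ 0) : (u a : ℤ) ∈ Set.Icc 2 (r : ℤ) :=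
    ⟨mod_cast hu.two_le ha, mod_cast (hu a).2.1⟩
  have position_ne {a b : Fin r} (hab : a ≠ b) : (u a : ℤ) ≠ u b :=
    mod_cast hu.injective.ne hab
  have bound : radicalForm r (u i) (u j) (u k) ≤ 4 * r - 10 :=
    radicalForm_le (mem_Icc hi).2 (mem_Icc hj) (mem_Icc hk)
      (position_ne hij) (position_ne hik) (position_ne hjk)
  rw [radicalForm] at bound
  rw [hu.incidence_eq hi, hu.incidence_eq hi, hu.incidence_eq hj, hu.incidence_eq hj,
    hu.incidence_eq hk, hu.incidence_eq hk]
  exact_mod_cast bound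
end
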